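/- arXiv:1509.07489 — 6 statements merged into one kernel-verified Lean document; each statement's English description precedes it below -/
import Mathlib

section
/- Let n ≥ 1 be odd, n₁ = (n+1)/2, n₀ = (n−1)/2. Let k ∈ K, and write k·a(ϖ^{n₁}) = b·k₂ for some upper-triangular b ∈ GL₂(F) and k₂ ∈ K (Iwasawa decomposition); let c be the lower-left entry of k₂ and set l = min(v(c), n) (with l = n if c = 0). Then: (1) l ≥ n₁ if and only if k ∈ N(𝔬)·K^0(𝔭); and (2) l ≤ n₀ if and only if k ∈ w·K^0(𝔭). (In particular the conditions l ≥ n₁ and l ≤ n₀ do not depend on the chosen Iwasawa decomposition.) -/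
open Matrix

section

variable {F : Type*} [Field F]

/-- `x ∈ 𝔬`, the ring of integers of the discretely valued field `(F, v)`. -/
def InO (v : F → ℤ) (x : F) : Prop := x = 0 ∨ 0 ≤ v x

/-- `x ∈ 𝔭^r`. -/
def InP (v : F → ℤ) (r : ℕ) (x : F) : Prop := x = 0 ∨ (r : ℤ) ≤ v x

/-- `k ∈ K = GL₂(𝔬)`: integral entries and unit determinant. -/
def InK (v : F → ℤ) (k : Matrix (Fin 2) (Fin 2) F) : Prop :=
  (∀ i j : Fin 2, InO v (k i j)) ∧ k.det ≠ 0 ∧ v k.det = 0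

/-- `k ∈ K^0(𝔭^r)`: in `K` with upper-right entry in `𝔭^r`. -/
def InK0upper (v : F → ℤ) (r : ℕ) (k : Matrix (Fin 2) (Fin 2) F) : Prop :=
  InK v k ∧ InP v r (k 0 1)

def aMat (y : F) : Matrix (Fin 2) (Fin 2) F := !![y, 0; 0, 1]

def nMat (x : F) : Matrix (Fin 2) (Fin 2) F := !![1, x; 0, 1]

def wMat : Matrix (Fin 2) (Fin 2) F := !![0, 1; -1, 0]

open scoped Classical in
/-- The invariant `l = min(v(c), n)`, with `l = n` when `c = 0`. -/
noncomputable def lInv (v : F → ℤ) (n : ℕ) (c : F) : ℤ :=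
  if c = 0 then (n : ℤ) else min (v c) (n : ℤ)

end

section helpers

variable {F : Type*} [Field F]

lemma aux_v_one (v : F → ℤ)
    (hmul : ∀ x y : F, x ≠ 0 → y ≠ 0 → v (x * y) = v x + v y) : v 1 = 0 := by
  have := hmul 1 1 one_ne_zero one_ne_zero
  rw [mul_one] at this
  omega

lemma aux_v_neg (v : F → ℤ)
    (hmul : ∀ x y : F, x ≠ 0 → y ≠ 0 → v (x * y) = v x + v y) (x : F) : v (-x) = v x := by
  by_cases hx : x = 0
  · simp [hx]
  have h1 := hmul (-1) (-1) (neg_ne_zero.2 one_ne_zero) (neg_ne_zero.2 one_ne_zero)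
  have h2 := hmul (-1) x (neg_ne_zero.2 one_ne_zero) hx
  have h3 := aux_v_one v hmul
  simp only [neg_mul_neg, mul_one] at h1
  rw [neg_one_mul] at h2
  omega

lemma aux_v_pow (v : F → ℤ)
    (hmul : ∀ x y : F, x ≠ 0 → y ≠ 0 → v (x * y) = v x + v y) (x : F) (hx : x ≠ 0)
    (m : ℕ) : v (x ^ m) = m * v x := by
  induction m with
  | zero => simp [aux_v_one v hmul]
  | succ m ih =>
    rw [pow_succ, hmul _ _ (pow_ne_zero _ hx) hx, ih]
    push_cast
    ring

lemma aux_neg (v : F → ℤ)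
    (hmul : ∀ x y : F, x ≠ 0 → y ≠ 0 → v (x * y) = v x + v y) {r : ℕ} {x : F}
    (h : InP v r x) : InP v r (-x) := by
  rcases h with h | h
  · left; simp [h]
  · right; rwa [aux_v_neg v hmul]

lemma aux_mul (v : F → ℤ)
    (hmul : ∀ x y : F, x ≠ 0 → y ≠ 0 → v (x * y) = v x + v y) {r s : ℕ} {x y : F}
    (hx : InP v r x) (hy : InP v s y) : InP v (r + s) (x * y) := by
  by_cases x0 : x = 0
  · left; simp [x0]
  by_cases y0 : y = 0
  · left; simp [y0]
  right
  rw [hmul x y x0 y0]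
  have h1 := hx.resolve_left x0
  have h2 := hy.resolve_left y0
  push_cast
  omega

lemma aux_add (v : F → ℤ)
    (hadd : ∀ x y : F, x ≠ 0 → y ≠ 0 → x + y ≠ 0 → min (v x) (v y) ≤ v (x + y))
    {r : ℕ} {x y : F}
    (hx : InP v r x) (hy : InP v r y) : InP v r (x + y) := by
  by_cases x0 : x = 0
  · simpa [x0] using hy
  by_cases y0 : y = 0
  · simpa [y0] using hx
  by_cases z0 : x + y = 0
  · left; exact z0
  right
  have h1 := hx.resolve_left x0
  have h2 := hy.resolve_left y0
  have := hadd x y x0 y0 z0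
  omega

lemma aux_InO (v : F → ℤ) (x : F) : InO v x ↔ InP v 0 x := by
  simp [InO, InP]

/-- An integral element is a unit or lies in the maximal ideal. -/
lemma aux_cases (v : F → ℤ) {x : F} (h : InO v x) : InP v 1 x ∨ (x ≠ 0 ∧ v x = 0) := by
  by_cases x0 : x = 0
  · left; left; exact x0
  have := h.resolve_left x0
  by_cases hv : v x = 0
  · right; exact ⟨x0, hv⟩
  · left; right; push_cast; omega

lemma aux_not (v : F → ℤ) {x : F} (x0 : x ≠ 0) (hv : v x = 0) : ¬ InP v 1 x := by
  rintro (h | h)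
  · exact x0 h
  · push_cast at h; omega

/-- The bottom row of an element of `K` is primitive. -/
lemma aux_row (v : F → ℤ)
    (hmul : ∀ x y : F, x ≠ 0 → y ≠ 0 → v (x * y) = v x + v y)
    (hadd : ∀ x y : F, x ≠ 0 → y ≠ 0 → x + y ≠ 0 → min (v x) (v y) ≤ v (x + y))
    {k : Matrix (Fin 2) (Fin 2) F} (hk : InK v k) (hd : InP v 1 (k 1 1)) :
    k 1 0 ≠ 0 ∧ v (k 1 0) = 0 := by
  rcases aux_cases v (hk.1 1 0) with h | h
  · exfalso
    refine aux_not v hk.2.1 hk.2.2 ?_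
    rw [det_fin_two, sub_eq_add_neg]
    exact aux_add v hadd (aux_mul v hmul ((aux_InO v _).1 (hk.1 0 0)) hd)
      (aux_neg v hmul (aux_mul v hmul ((aux_InO v _).1 (hk.1 0 1)) h))
  · exact h

/-- The right column of an element of `K` is primitive. -/
lemma aux_col (v : F → ℤ)
    (hmul : ∀ x y : F, x ≠ 0 → y ≠ 0 → v (x * y) = v x + v y)
    (hadd : ∀ x y : F, x ≠ 0 → y ≠ 0 → x + y ≠ 0 → min (v x) (v y) ≤ v (x + y))
    {k : Matrix (Fin 2) (Fin 2) F} (hk : InK v k) (hb : InP v 1 (k 0 1))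
    (hd : InP v 1 (k 1 1)) : False := by
  refine aux_not v hk.2.1 hk.2.2 ?_
  rw [det_fin_two, sub_eq_add_neg]
  exact aux_add v hadd (aux_mul v hmul ((aux_InO v _).1 (hk.1 0 0)) hd)
    (aux_neg v hmul (aux_mul v hmul hb ((aux_InO v _).1 (hk.1 1 0))))

/-- `k ∈ N(𝔬) K^0(𝔭)` iff the lower-right entry is not in `𝔭`. -/
lemma aux_one (v : F → ℤ)
    (hmul : ∀ x y : F, x ≠ 0 → y ≠ 0 → v (x * y) = v x + v y)
    (hadd : ∀ x y : F, x ≠ 0 → y ≠ 0 → x + y ≠ 0 → min (v x) (v y) ≤ v (x + y))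
    {k : Matrix (Fin 2) (Fin 2) F} (hk : InK v k) :
    (∃ (x : F) (u : Matrix (Fin 2) (Fin 2) F),
        InO v x ∧ InK0upper v 1 u ∧ k = nMat x * u) ↔ ¬ InP v 1 (k 1 1) := by
  constructor
  · rintro ⟨x, u, hx, hu, rfl⟩ hd
    have : (nMat x * u) 1 1 = u 1 1 := by simp [nMat, Matrix.mul_apply, Fin.sum_univ_two]
    rw [this] at hd
    exact aux_col v hmul hadd hu.1 hu.2 hd
  · intro hd
    obtain ⟨d0, hv⟩ := (aux_cases v (hk.1 1 1)).resolve_left hd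
    have hinv : InP v 0 (k 1 1)⁻¹ := by
      right
      have h := hmul _ _ d0 (inv_ne_zero d0)
      rw [mul_inv_cancel₀ d0, aux_v_one v hmul] at h
      push_cast
      omega
    have hO : ∀ i j, InP v 0 (k i j) := fun i j => (aux_InO v _).1 (hk.1 i j)
    have hx : InP v 0 (k 0 1 * (k 1 1)⁻¹) := aux_mul v hmul (hO 0 1) hinv
    refine ⟨k 0 1 * (k 1 1)⁻¹,
      !![k 0 0 - k 0 1 * (k 1 1)⁻¹ * k 1 0, 0; k 1 0, k 1 1], (aux_InO v _).2 hx,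
      ⟨⟨?_, ?_⟩, ?_⟩, ?_⟩
    · intro i j
      rw [aux_InO]
      fin_cases i <;> fin_cases j
      · simpa [sub_eq_add_neg] using
          aux_add v hadd (hO 0 0) (aux_neg v hmul (aux_mul v hmul hx (hO 1 0)))
      · left; simp
      · simpa using hO 1 0
      · simpa using hO 1 1
    · have : (!![k 0 0 - k 0 1 * (k 1 1)⁻¹ * k 1 0, 0; k 1 0, k 1 1]).det = k.det := by
        rw [det_fin_two, det_fin_two]
        simp
        field_simp
      rw [this]
      exact hk.2
    · left; simp
    · ext i j
      fin_cases i <;> fin_cases j <;> simp [nMat, Matrix.mul_apply, Fin.sum_univ_two, d0]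

/-- `k ∈ w K^0(𝔭)` iff the lower-right entry is in `𝔭`. -/
lemma aux_two (v : F → ℤ)
    (hmul : ∀ x y : F, x ≠ 0 → y ≠ 0 → v (x * y) = v x + v y)
    {k : Matrix (Fin 2) (Fin 2) F} (hk : InK v k) :
    (∃ u : Matrix (Fin 2) (Fin 2) F, InK0upper v 1 u ∧ k = wMat * u) ↔ InP v 1 (k 1 1) := by
  constructor
  · rintro ⟨u, hu, rfl⟩
    have : ((wMat : Matrix (Fin 2) (Fin 2) F) * u) 1 1 = - u 0 1 := by simp [wMat, Matrix.mul_apply, Fin.sum_univ_two]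
    rw [this]
    exact aux_neg v hmul hu.2
  · intro hd
    have hO : ∀ i j, InP v 0 (k i j) := fun i j => (aux_InO v _).1 (hk.1 i j)
    refine ⟨!![-k 1 0, -k 1 1; k 0 0, k 0 1], ⟨⟨?_, ?_⟩, ?_⟩, ?_⟩
    · intro i j
      rw [aux_InO]
      fin_cases i <;> fin_cases j
      · simpa using aux_neg v hmul (hO 1 0)
      · simpa using aux_neg v hmul (hO 1 1)
      · simpa using hO 0 0
      · simpa using hO 0 1
    · have : (!![-k 1 0, -k 1 1; k 0 0, k 0 1]).det = k.det := by
        rw [det_fin_two, det_fin_two]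
        simp
        ring
      rw [this]
      exact hk.2
    · simpa using aux_neg v hmul hd
    · ext i j
      fin_cases i <;> fin_cases j <;> simp [wMat, Matrix.mul_apply, Fin.sum_univ_two]

end helpers

/-- Lemma (support of matrix invariants, odd conductor): for `k ∈ K`,
`l(k·a(ϖ^{n₁})) ≥ n₁ ↔ k ∈ N(𝔬)K^0(𝔭)` and `l(k·a(ϖ^{n₁})) ≤ n₀ ↔ k ∈ wK^0(𝔭)`. -/
theorem stmt_4 {F : Type*} [Field F] [CharZero F] (v : F → ℤ)
    (hmul : ∀ x y : F, x ≠ 0 → y ≠ 0 → v (x * y) = v x + v y)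
    (hadd : ∀ x y : F, x ≠ 0 → y ≠ 0 → x + y ≠ 0 → min (v x) (v y) ≤ v (x + y))
    (ϖ : F) (hϖ0 : ϖ ≠ 0) (hϖ : v ϖ = 1)
    (n n₁ n₀ : ℕ) (hn : 1 ≤ n) (hodd : Odd n) (hn₁ : n₁ = (n + 1) / 2) (hn₀ : n₀ = (n - 1) / 2)
    (k : Matrix (Fin 2) (Fin 2) F) (hk : InK v k)
    (b k₂ : Matrix (Fin 2) (Fin 2) F)
    (hb : b 1 0 = 0) (hbinv : b.det ≠ 0) (hk₂ : InK v k₂)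
    (hIwasawa : k * aMat (ϖ ^ n₁) = b * k₂) :
    ((n₁ : ℤ) ≤ lInv v n (k₂ 1 0) ↔
      ∃ (x : F) (u : Matrix (Fin 2) (Fin 2) F),
        InO v x ∧ InK0upper v 1 u ∧ k = nMat x * u) ∧
    (lInv v n (k₂ 1 0) ≤ (n₀ : ℤ) ↔
      ∃ u : Matrix (Fin 2) (Fin 2) F, InK0upper v 1 u ∧ k = wMat * u) := by
  rw [aux_one v hmul hadd hk, aux_two v hmul hk]
  have hn01 : n₁ = n₀ + 1 ∧ n = 2 * n₀ + 1 := by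
    obtain ⟨m, hm⟩ := hodd
    omega
  have e0 : k 1 0 * ϖ ^ n₁ = b 1 1 * k₂ 1 0 := by
    have := congrFun (congrFun hIwasawa 1) 0
    simpa [aMat, Matrix.mul_apply, Fin.sum_univ_two, hb] using this
  have e1 : k 1 1 = b 1 1 * k₂ 1 1 := by
    have := congrFun (congrFun hIwasawa 1) 1
    simpa [aMat, Matrix.mul_apply, Fin.sum_univ_two, hb] using this
  have b0 : b 1 1 ≠ 0 := by
    intro h
    apply hbinv
    rw [det_fin_two, h, hb]
    ring
  have hp0 : ϖ ^ n₁ ≠ 0 := pow_ne_zero _ hϖ0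
  have hpv : v (ϖ ^ n₁) = n₁ := by rw [aux_v_pow v hmul ϖ hϖ0, hϖ, mul_one]
  have hA : ¬ InP v 1 (k 1 1) → (n₁ : ℤ) ≤ lInv v n (k₂ 1 0) := by
    intro hd
    obtain ⟨d0, hv⟩ := (aux_cases v (hk.1 1 1)).resolve_left hd
    unfold lInv
    split_ifs with hc
    · omega
    · have hC0 : k 1 0 ≠ 0 := by
        intro h
        rw [h, zero_mul] at e0
        exact mul_ne_zero b0 hc e0.symm
      have hd0 : k₂ 1 1 ≠ 0 := by
        intro h
        rw [h, mul_zero] at e1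
        exact d0 e1
      have f0 := congrArg v e0
      have f1 := congrArg v e1
      rw [hmul _ _ hC0 hp0, hmul _ _ b0 hc, hpv] at f0
      rw [hmul _ _ b0 hd0] at f1
      have g1 := (hk.1 1 0).resolve_left hC0
      have g2 := (hk₂.1 1 1).resolve_left hd0
      omega
  have hB : InP v 1 (k 1 1) → lInv v n (k₂ 1 0) ≤ (n₀ : ℤ) := by
    intro hd
    obtain ⟨hC0, hCv⟩ := aux_row v hmul hadd hk hd
    have hc : k₂ 1 0 ≠ 0 := by
      intro h
      rw [h, mul_zero] at e0
      exact mul_ne_zero hC0 hp0 e0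
    unfold lInv
    rw [if_neg hc]
    rcases aux_cases v (hk₂.1 1 1) with h | ⟨hd0, hdv⟩
    · have := (aux_row v hmul hadd hk₂ h).2
      omega
    · have f0 := congrArg v e0
      have f1 := congrArg v e1
      rw [hmul _ _ hC0 hp0, hmul _ _ b0 hc, hpv] at f0
      rw [hmul _ _ b0 hd0] at f1
      have g1 := hd.resolve_left (by rw [e1]; exact mul_ne_zero b0 hd0)
      push_cast at g1
      omega
  refine ⟨⟨fun h hd => ?_, hA⟩, ⟨fun h => ?_, hB⟩⟩
  · have := hB hd
    omega
  · by_contra hd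
    have := hA hd
    omega
end

section
/- Let n ≥ 1 be odd, n₁ = (n+1)/2. Suppose k ∈ K₀(𝔭) and g ∈ {1, [[0,1],[ϖ,0]]}. Then there exist k′ ∈ w·K^0(𝔭) (equivalently, k′ ∈ K such that in any Iwasawa decomposition k′·a(ϖ^{n₁}) = b·k₂ with b upper triangular and k₂ ∈ K with lower-left entry c, one has min(v(c), n) ≤ (n−1)/2), an element g′ ∈ {1, [[0,1],[ϖⁿ,0]]}, and t ∈ F^× such that k·g·w·a(ϖ^{n₁}) = k′·a(ϖ^{n₁})·g′·z(t). -/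
open Matrix

section

variable {F : Type*} [Field F]

/-- `k ∈ K₀(𝔭^r)`: in `K` with lower-left entry in `𝔭^r`. -/
def InK0lower (v : F → ℤ) (r : ℕ) (k : Matrix (Fin 2) (Fin 2) F) : Prop :=
  InK v k ∧ InP v r (k 1 0)

def zMat (t : F) : Matrix (Fin 2) (Fin 2) F := !![t, 0; 0, t]

end

/-- Lemma on Atkin–Lehner translates: for `k ∈ K₀(𝔭)` and
`g ∈ {1, [[0,1],[ϖ,0]]}`, one has `k·g·w·a(ϖ^{n₁}) = k′·a(ϖ^{n₁})·g′·z(t)` with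
`k′ ∈ w·K^0(𝔭)`, `g′ ∈ {1, [[0,1],[ϖⁿ,0]]}` and `t ∈ F^×`. -/
theorem stmt_5 {F : Type*} [Field F] [CharZero F] (v : F → ℤ)
    (hmul : ∀ x y : F, x ≠ 0 → y ≠ 0 → v (x * y) = v x + v y)
    (hadd : ∀ x y : F, x ≠ 0 → y ≠ 0 → x + y ≠ 0 → min (v x) (v y) ≤ v (x + y))
    (ϖ : F) (hϖ0 : ϖ ≠ 0) (hϖ : v ϖ = 1)
    (n n₁ : ℕ) (hn : 1 ≤ n) (hodd : Odd n) (hn₁ : n₁ = (n + 1) / 2)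
    (k : Matrix (Fin 2) (Fin 2) F) (hk : InK0lower v 1 k)
    (g : Matrix (Fin 2) (Fin 2) F) (hg : g = 1 ∨ g = !![0, 1; ϖ, 0]) :
    ∃ (u g' : Matrix (Fin 2) (Fin 2) F) (t : F),
      InK0upper v 1 u ∧ (g' = 1 ∨ g' = !![0, 1; ϖ ^ n, 0]) ∧ t ≠ 0 ∧
        k * g * wMat * aMat (ϖ ^ n₁) = (wMat * u) * aMat (ϖ ^ n₁) * g' * zMat t := by
  obtain ⟨⟨hO, hd0, hd⟩, hc⟩ := hk
  have h1 : v 1 = 0 := by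
    have := hmul 1 1 one_ne_zero one_ne_zero
    rw [mul_one] at this
    omega
  have hm1 : v (-1) = 0 := by
    have := hmul (-1) (-1) (by simp) (by simp)
    rw [neg_one_mul, neg_neg, h1] at this
    omega
  have hneg : ∀ x : F, x ≠ 0 → v (-x) = v x := by
    intro x hx
    rw [← neg_one_mul, hmul _ _ (by simp) hx, hm1, zero_add]
  have hOneg : ∀ x : F, InO v x → InO v (-x) := by
    intro x hx
    by_cases h0 : x = 0
    · left; simp [h0]
    · right
      rw [hneg x h0]
      exact hx.resolve_left h0
  have hPneg : ∀ x : F, InP v 1 x → InP v 1 (-x) := by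
    intro x hx
    by_cases h0 : x = 0
    · left; simp [h0]
    · right
      rw [hneg x h0]
      exact hx.resolve_left h0
  obtain ⟨m, rfl⟩ := hodd
  have hm : n₁ = m + 1 := by omega
  subst hm
  have hk2 := Matrix.eta_fin_two k
  rw [Matrix.det_fin_two] at hd0 hd
  rcases hg with rfl | rfl
  · refine ⟨!![k 1 1, -k 1 0; -k 0 1, k 0 0], 1, 1, ⟨⟨?_, ?_, ?_⟩, ?_⟩, Or.inl rfl, one_ne_zero, ?_⟩
    · intro i j
      fin_cases i <;> fin_cases j <;> simp [hO, hOneg]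
    · rw [Matrix.det_fin_two_of]
      convert hd0 using 1
      ring
    · rw [Matrix.det_fin_two_of, ← hd]
      congr 1
      ring
    · simpa using hPneg _ hc
    · rw [hk2]
      ext i j
      fin_cases i <;> fin_cases j <;> simp [wMat, aMat, zMat, Matrix.mul_apply, Fin.sum_univ_two]
  · refine ⟨!![-k 1 1, k 1 0; k 0 1, -k 0 0], _, (ϖ ^ m)⁻¹, ⟨⟨?_, ?_, ?_⟩, ?_⟩, Or.inr rfl,
      inv_ne_zero (pow_ne_zero _ hϖ0), ?_⟩
    · intro i j
      fin_cases i <;> fin_cases j <;> simp [hO, hOneg]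
    · rw [Matrix.det_fin_two_of]
      convert hd0 using 1
      ring
    · rw [Matrix.det_fin_two_of, ← hd]
      congr 1
      ring
    · simpa using hc
    · rw [hk2]
      ext i j
      fin_cases i <;> fin_cases j <;>
        simp [wMat, aMat, zMat, Matrix.mul_apply, Fin.sum_univ_two] <;> field_simp <;> ring
end

section
/- Let n ≥ 0 and n₁ = ⌈n/2⌉. Let k ∈ K and write k·a(ϖ^{n₁}) = b·k₂ with b ∈ GL₂(F) upper triangular with diagonal entries d₁, d₂, and k₂ ∈ K with lower-left entry c. Set l = min(v(c), n) (with l = n if c = 0) and t = v(d₁) − v(d₂) − 2l. Then t = min(n₁ − 2l, −n₁); equivalently, v(d₁) − v(d₂) = min(n₁, 2l − n₁). -/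
open Matrix

/-- The bottom row of an element of `GL₂(𝔬)` is primitive. -/
theorem bottom_row_primitive {F : Type*} [Field F] (v : F → ℤ)
    (hmul : ∀ x y : F, x ≠ 0 → y ≠ 0 → v (x * y) = v x + v y)
    (hadd : ∀ x y : F, x ≠ 0 → y ≠ 0 → x + y ≠ 0 → min (v x) (v y) ≤ v (x + y))
    (m : Matrix (Fin 2) (Fin 2) F) (hm : InK v m) :
    (m 1 0 ≠ 0 ∧ v (m 1 0) = 0) ∨ (m 1 1 ≠ 0 ∧ v (m 1 1) = 0) := by
  obtain ⟨hO, hd, hv⟩ := hm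
  have h1 : v 1 = 0 := by
    have := hmul 1 1 one_ne_zero one_ne_zero
    rw [mul_one] at this
    omega
  have hneg1 : v (-1) = 0 := by
    have h := hmul (-1) (-1) (by simp) (by simp)
    rw [neg_mul_neg, mul_one, h1] at h
    omega
  have hneg : ∀ x : F, x ≠ 0 → v (-x) = v x := by
    intro x hx
    have h := hmul (-1) x (by simp) hx
    rw [neg_one_mul] at h
    omega
  -- products of an integral element and a non-unit have positive valuation
  have key : ∀ x y : F, InO v x → InO v y → ¬ (y ≠ 0 ∧ v y = 0) →
      x * y = 0 ∨ 0 < v (x * y) := by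
    intro x y hx hy hn
    by_cases hx0 : x = 0
    · left; simp [hx0]
    by_cases hy0 : y = 0
    · left; simp [hy0]
    right
    rw [hmul x y hx0 hy0]
    have h3 : v y ≠ 0 := fun h => hn ⟨hy0, h⟩
    have h4 := hx.resolve_left hx0
    have h5 := hy.resolve_left hy0
    omega
  by_contra hcon
  rw [not_or] at hcon
  have kA := key _ _ (hO 0 0) (hO 1 1) hcon.2
  have kB := key _ _ (hO 0 1) (hO 1 0) hcon.1
  rw [Matrix.det_fin_two] at hd hv
  generalize m 0 0 * m 1 1 = A at *
  generalize m 0 1 * m 1 0 = B at *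
  by_cases hA : A = 0
  · subst hA
    have hB : B ≠ 0 := by rintro rfl; simp at hd
    have := kB.resolve_left hB
    rw [zero_sub, hneg B hB] at hv
    omega
  by_cases hB : B = 0
  · subst hB
    have := kA.resolve_left hA
    rw [sub_zero] at hv
    omega
  have h2 := kA.resolve_left hA
  have h3 := kB.resolve_left hB
  rw [sub_eq_add_neg] at hd hv
  have h4 := hadd A (-B) hA (neg_ne_zero.mpr hB) hd
  rw [hneg B hB] at h4
  omega

/-- Lemma on the invariant `t(g)` for `g ∈ K·a(ϖ^{n₁})`: writing
`k·a(ϖ^{n₁}) = b·k₂` (Iwasawa decomposition) with `b` upper triangular with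
diagonal `d₁, d₂` and `k₂ ∈ K`, and `l = min(v(k₂ 1 0), n)`, one has
`v(d₁) − v(d₂) − 2l = min(n₁ − 2l, −n₁)`. -/
theorem stmt_6 {F : Type*} [Field F] [CharZero F] (v : F → ℤ)
    (hmul : ∀ x y : F, x ≠ 0 → y ≠ 0 → v (x * y) = v x + v y)
    (hadd : ∀ x y : F, x ≠ 0 → y ≠ 0 → x + y ≠ 0 → min (v x) (v y) ≤ v (x + y))
    (ϖ : F) (hϖ0 : ϖ ≠ 0) (hϖ : v ϖ = 1)
    (n n₁ : ℕ) (hn₁ : n₁ = (n + 1) / 2)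
    (k : Matrix (Fin 2) (Fin 2) F) (hk : InK v k)
    (b k₂ : Matrix (Fin 2) (Fin 2) F)
    (hb : b 1 0 = 0) (hbinv : b.det ≠ 0) (hk₂ : InK v k₂)
    (hIwasawa : k * aMat (ϖ ^ n₁) = b * k₂) :
    v (b 0 0) - v (b 1 1) - 2 * lInv v n (k₂ 1 0)
      = min ((n₁ : ℤ) - 2 * lInv v n (k₂ 1 0)) (-(n₁ : ℤ)) := by
  have hkp := bottom_row_primitive v hmul hadd k hk
  have hk2p := bottom_row_primitive v hmul hadd k₂ hk₂
  have h1 : v 1 = 0 := by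
    have := hmul 1 1 one_ne_zero one_ne_zero
    rw [mul_one] at this
    omega
  have hpow : ∀ j : ℕ, v (ϖ ^ j) = j := by
    intro j
    induction j with
    | zero => simpa using h1
    | succ j ih =>
      rw [pow_succ, hmul _ _ (pow_ne_zero _ hϖ0) hϖ0, ih, hϖ]
      push_cast
      rfl
  have hP := hpow n₁
  have hP0 : ϖ ^ n₁ ≠ 0 := pow_ne_zero _ hϖ0
  have hdet := congrArg Matrix.det hIwasawa
  have e10 := congrFun (congrFun hIwasawa 1) 0
  have e11 := congrFun (congrFun hIwasawa 1) 1
  have hda : (aMat (ϖ ^ n₁)).det = ϖ ^ n₁ := by simp [aMat, Matrix.det_fin_two]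
  have hdb : b.det = b 0 0 * b 1 1 := by rw [Matrix.det_fin_two, hb]; ring
  simp only [Matrix.mul_apply, Fin.sum_univ_two, hb, zero_mul, zero_add] at e10 e11
  simp only [aMat, Matrix.of_apply, Matrix.cons_val', Matrix.cons_val_zero,
    Matrix.cons_val_one, mul_zero, add_zero, zero_add, mul_one,
    Matrix.cons_val_fin_one] at e10 e11
  rw [hdb] at hbinv
  have hb0 := left_ne_zero_of_mul hbinv
  have hb1 := right_ne_zero_of_mul hbinv
  rw [Matrix.det_mul, Matrix.det_mul, hda, hdb] at hdet
  have hvdet := congrArg v hdet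
  rw [hmul _ _ hk.2.1 hP0, hmul _ _ hbinv hk₂.2.1, hmul _ _ hb0 hb1, hk.2.2, hk₂.2.2, hP] at hvdet
  have hk0 := hk.1 1 0
  have hk1 := hk.1 1 1
  have hc0 := hk₂.1 1 0
  have hc1 := hk₂.1 1 1
  clear hIwasawa hdet hk hk₂ hda hdb
  generalize ϖ ^ n₁ = P at *
  generalize b 0 0 = d₁ at *
  generalize b 1 1 = d₂ at *
  generalize k 1 0 = x at *
  generalize k 1 1 = y at *
  generalize k₂ 1 0 = c at *
  generalize k₂ 1 1 = d at *
  unfold InO at *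
  have hxc : x = 0 ↔ c = 0 := by
    constructor
    · rintro rfl
      simpa [hb1] using e10.symm
    · rintro rfl
      simpa [hP0] using e10
  have hyd : y = 0 ↔ d = 0 := by
    rw [e11]; simp [hb1]
  have v10 : c ≠ 0 → v x + n₁ = v d₂ + v c := by
    intro hc
    have h := congrArg v e10
    rwa [hmul _ _ (fun h => hc (hxc.mp h)) hP0, hmul _ _ hb1 hc, hP] at h
  have v11 : d ≠ 0 → v y = v d₂ + v d := by
    intro hd
    rw [e11, hmul _ _ hb1 hd]
  unfold lInv
  simp only [ne_eq, hxc, hyd] at *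
  clear e10 e11 hmul hadd hpow
  by_cases hc : c = 0 <;> by_cases hd : d = 0 <;>
    simp only [hc, hd, not_true_eq_false, not_false_eq_true, false_and, true_and, or_self,
      false_or, or_false, true_or, forall_const, if_true, if_false] at * <;> omega
end

section
/- Let n ≥ 0, n₁ = ⌈n/2⌉, n₀ = ⌊n/2⌋, and let m₁ ≥ 0 be an integer. Let K′ = {[[a,b],[c,d]] ∈ K : a − 1 ∈ 𝔭^{n₀+m₁}, d − 1 ∈ 𝔭^{n₀+m₁}, b ∈ 𝔭^{n₁+m₁}, c ∈ 𝔭^{n₀+m₁}}. Then the double coset space B(F)\GL₂(F)/K′ is finite, and there is an absolute constant C (independent of F, q, n, m₁) such that its cardinality is at most C·q^{n₀+m₁}. -/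
open Matrix

section

variable {F : Type*} [Field F]

/-- Membership in the congruence subgroup `K′`:
`a − 1, d − 1, c ∈ 𝔭^{n₀+m₁}` and `b ∈ 𝔭^{n₁+m₁}`. -/
def InK' (v : F → ℤ) (n₀ n₁ m₁ : ℕ) (k : Matrix (Fin 2) (Fin 2) F) : Prop :=
  InK v k ∧ InP v (n₀ + m₁) (k 0 0 - 1) ∧ InP v (n₀ + m₁) (k 1 1 - 1) ∧
    InP v (n₁ + m₁) (k 0 1) ∧ InP v (n₀ + m₁) (k 1 0)

/-- The double coset relation on `GL₂(F)` for `B(F)\GL₂(F)/K′`: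
`g ∼ g′` iff `g′ = b·g·k⁻¹` with `b ∈ B(F)` upper triangular and `k ∈ K′`. -/
def DCRel (v : F → ℤ) (n₀ n₁ m₁ : ℕ) (g g' : GL (Fin 2) F) : Prop :=
  ∃ b k : GL (Fin 2) F, (b : Matrix (Fin 2) (Fin 2) F) 1 0 = 0 ∧
    InK' v n₀ n₁ m₁ (k : Matrix (Fin 2) (Fin 2) F) ∧ g' = b * g * k⁻¹

end

theorem InP.mono' {F : Type*} [Field F] {v : F → ℤ} {r s : ℕ} (h : r ≤ s) {x : F}
    (hx : InP v s x) : InP v r x := by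
  rcases hx with hx | hx
  · exact Or.inl hx
  · right; omega

theorem InP.mul_pi {F : Type*} [Field F] {v : F → ℤ}
    (hm : ∀ x y : F, x ≠ 0 → y ≠ 0 → v (x * y) = v x + v y) {p : F} (hp : p ≠ 0) (hv : v p = 1)
    {r : ℕ} {x : F} (hx : InP v r x) : InP v (r + 1) (p * x) := by
  by_cases h0 : x = 0
  · left; simp [h0]
  · rcases hx with hx | hx
    · exact absurd hx h0
    · right; rw [hm p x hp h0, hv]; push_cast; omega

theorem InP.div_pi {F : Type*} [Field F] {v : F → ℤ}
    (hm : ∀ x y : F, x ≠ 0 → y ≠ 0 → v (x * y) = v x + v y) {p : F} (hp : p ≠ 0) (hv : v p = 1)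
    {x : F} (hx : InP v 1 x) : ∃ y, x = p * y ∧ InO v y := by
  refine ⟨x / p, by field_simp, ?_⟩
  by_cases h0 : x = 0
  · left; simp [h0]
  · rcases hx with hx | hx
    · exact absurd hx h0
    · right
      have h := hm p (x / p) hp (div_ne_zero h0 hp)
      rw [mul_div_cancel₀ x hp, hv] at h
      push_cast at hx
      omega

theorem exists_reps {F : Type*} [Field F] {v : F → ℤ}
    (hm : ∀ x y : F, x ≠ 0 → y ≠ 0 → v (x * y) = v x + v y) {p : F} (hp : p ≠ 0) (hv : v p = 1)
    (R : Finset F) (hR : ∀ x : F, InO v x → ∃ r ∈ R, InP v 1 (x - r)) (N : ℕ) :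
    ∃ S : Finset F, S.card ≤ R.card ^ N ∧ ∀ x, InO v x → ∃ s ∈ S, InP v N (x - s) := by
  classical
  induction N with
  | zero =>
    refine ⟨{0}, by simp, fun x hx => ⟨0, by simp, ?_⟩⟩
    simpa [InP, InO] using hx
  | succ N ih =>
    obtain ⟨S, hS, h⟩ := ih
    refine ⟨(R ×ˢ S).image (fun t => t.1 + p * t.2), ?_, ?_⟩
    · refine Finset.card_image_le.trans ?_
      rw [Finset.card_product, pow_succ, mul_comm]
      exact Nat.mul_le_mul_right _ hS
    · intro x hx
      obtain ⟨r, hr, hxr⟩ := hR x hx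
      obtain ⟨y, hy, hyO⟩ := InP.div_pi hm hp hv hxr
      obtain ⟨s, hs, hys⟩ := h y hyO
      refine ⟨r + p * s, Finset.mem_image.2 ⟨(r, s), by simp [hr, hs], rfl⟩, ?_⟩
      have : x - (r + p * s) = p * (y - s) := by linear_combination hy
      rw [this]
      exact InP.mul_pi hm hp hv hys

theorem dcrel_of {F : Type*} [Field F] {v : F → ℤ} {n₀ n₁ m₁ : ℕ} (g g' k : GL (Fin 2) F)
    (hk : InK' v n₀ n₁ m₁ (k : Matrix (Fin 2) (Fin 2) F))
    (h : (g' * k : Matrix (Fin 2) (Fin 2) F) 1 0 * (g : Matrix (Fin 2) (Fin 2) F) 1 1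
      = (g' * k : Matrix (Fin 2) (Fin 2) F) 1 1 * (g : Matrix (Fin 2) (Fin 2) F) 1 0) :
    DCRel v n₀ n₁ m₁ g g' := by
  refine ⟨g' * k * g⁻¹, k, ?_, hk, by group⟩
  rw [Units.val_mul, Units.val_mul, Matrix.coe_units_inv, Matrix.inv_def, Matrix.mul_apply,
    Fin.sum_univ_two]
  simp only [Matrix.adjugate_fin_two, Matrix.smul_apply, Matrix.of_apply, Matrix.cons_val', Matrix.cons_val_zero,
    Matrix.cons_val_one, smul_eq_mul, Matrix.cons_val_fin_one]
  linear_combination (Ring.inverse (g : Matrix (Fin 2) (Fin 2) F).det) * h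

/-- Lower triangular unipotent. -/
noncomputable def lowU {F : Type*} [Field F] (s : F) : GL (Fin 2) F :=
  Matrix.GeneralLinearGroup.mkOfDetNeZero !![1, 0; s, 1] (by simp)

/-- Upper triangular unipotent. -/
noncomputable def uppU {F : Type*} [Field F] (s : F) : GL (Fin 2) F :=
  Matrix.GeneralLinearGroup.mkOfDetNeZero !![1, s; 0, 1] (by simp)

/-- Representative with bottom row `(1, s)`. -/
noncomputable def wU {F : Type*} [Field F] (s : F) : GL (Fin 2) F :=
  Matrix.GeneralLinearGroup.mkOfDetNeZero !![0, 1; 1, s] (by simp)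

theorem InP.toO {F : Type*} [Field F] {v : F → ℤ} {r : ℕ} {x : F} (hx : InP v r x) : InO v x := by
  rcases hx with hx | hx
  · exact Or.inl hx
  · right; omega

theorem lowU_mem {F : Type*} [Field F] {v : F → ℤ} (h1 : v 1 = 0) {n₀ n₁ m₁ : ℕ} {s : F}
    (hs : InP v (n₀ + m₁) s) :
    InK' v n₀ n₁ m₁ (lowU s : Matrix (Fin 2) (Fin 2) F) := by
  have e : (lowU s : Matrix (Fin 2) (Fin 2) F) = !![1, 0; s, 1] := rfl
  rw [e]
  refine ⟨⟨?_, by simp, by simp [h1]⟩, ?_, ?_, ?_, ?_⟩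
  · intro i j
    fin_cases i <;> fin_cases j
    · right; simp [h1]
    · left; simp
    · simpa using hs.toO
    · right; simp [h1]
  · left; simp
  · left; simp
  · left; simp
  · simpa using hs

theorem uppU_mem {F : Type*} [Field F] {v : F → ℤ} (h1 : v 1 = 0) {n₀ n₁ m₁ : ℕ} {s : F}
    (hs : InP v (n₁ + m₁) s) :
    InK' v n₀ n₁ m₁ (uppU s : Matrix (Fin 2) (Fin 2) F) := by
  have e : (uppU s : Matrix (Fin 2) (Fin 2) F) = !![1, s; 0, 1] := rfl
  rw [e]
  refine ⟨⟨?_, by simp, by simp [h1]⟩, ?_, ?_, ?_, ?_⟩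
  · intro i j
    fin_cases i <;> fin_cases j
    · right; simp [h1]
    · simpa using hs.toO
    · left; simp
    · right; simp [h1]
  · left; simp
  · left; simp
  · simpa using hs
  · left; simp

/-- The double coset space `B(F)\GL₂(F)/K′` is finite of cardinality
`≤ C·q^{n₀+m₁}` for an absolute constant `C`. -/
theorem stmt_8 :
    ∃ C : ℝ, 0 < C ∧
      ∀ (F : Type) (_ : Field F) (_ : CharZero F) (v : F → ℤ),
        (∀ x y : F, x ≠ 0 → y ≠ 0 → v (x * y) = v x + v y) →
        (∀ x y : F, x ≠ 0 → y ≠ 0 → x + y ≠ 0 → min (v x) (v y) ≤ v (x + y)) →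
        ∀ ϖ : F, ϖ ≠ 0 → v ϖ = 1 →
        ∀ (q : ℕ) (R : Finset F), R.card = q →
          (∀ r ∈ R, InO v r) →
          (∀ x : F, InO v x → ∃ r ∈ R, InP v 1 (x - r)) →
          (∀ r₁ ∈ R, ∀ r₂ ∈ R, InP v 1 (r₁ - r₂) → r₁ = r₂) →
        ∀ n n₁ n₀ m₁ : ℕ, n₁ = (n + 1) / 2 → n₀ = n / 2 →
          Finite (Quot (DCRel v n₀ n₁ m₁)) ∧
            (Nat.card (Quot (DCRel v n₀ n₁ m₁)) : ℝ) ≤ C * (q : ℝ) ^ (n₀ + m₁) := by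
  refine ⟨2, by norm_num, ?_⟩
  intro F _ _ v hm _ ϖ hp hv q R hq _ hR _ n n₁ n₀ m₁ hn₁ hn₀
  obtain ⟨S, hS, hSr⟩ := exists_reps hm hp hv R hR (n₀ + m₁)
  have h1 : v 1 = 0 := by
    have := hm 1 1 one_ne_zero one_ne_zero
    rw [mul_one] at this
    omega
  let f : S ⊕ S → Quot (DCRel v n₀ n₁ m₁) :=
    Sum.elim (fun s => Quot.mk _ (lowU s.1)) (fun s => Quot.mk _ (wU (ϖ * s.1)))
  have hf : Function.Surjective f := by
    intro x
    induction x using Quot.ind with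
    | mk g =>
    set c := (g : Matrix (Fin 2) (Fin 2) F) 1 0 with hc
    set d := (g : Matrix (Fin 2) (Fin 2) F) 1 1 with hd
    have hdet : (g : Matrix (Fin 2) (Fin 2) F).det ≠ 0 := g.det_ne_zero
    rw [Matrix.det_fin_two, ← hc, ← hd] at hdet
    by_cases hcase : d ≠ 0 ∧ InO v (c / d)
    · obtain ⟨hd0, hO⟩ := hcase
      obtain ⟨s, hs, hxs⟩ := hSr _ hO
      refine ⟨Sum.inl ⟨s, hs⟩, (Quot.sound ?_).symm⟩
      refine dcrel_of g _ (lowU (c / d - s)) (lowU_mem h1 hxs) ?_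
      change (!![1, 0; s, 1] * !![1, 0; c / d - s, 1] : Matrix (Fin 2) (Fin 2) F) 1 0 * d
        = (!![1, 0; s, 1] * !![1, 0; c / d - s, 1] : Matrix (Fin 2) (Fin 2) F) 1 1 * c
      simp [Matrix.mul_apply, Fin.sum_univ_two]
      field_simp
    · have key : c ≠ 0 ∧ InP v 1 (d / c) := by
        by_cases hd0 : d = 0
        · refine ⟨?_, Or.inl (by simp [hd0])⟩
          rintro h
          exact hdet (by rw [hd0, h]; ring)
        · have hnO : ¬ InO v (c / d) := fun h => hcase ⟨hd0, h⟩
          have hc0 : c ≠ 0 := fun h => hnO (Or.inl (by simp [h]))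
          refine ⟨hc0, Or.inr ?_⟩
          have h2 : ¬ 0 ≤ v (c / d) := fun h => hnO (Or.inr h)
          have h3 := hm (c / d) (d / c) (div_ne_zero hc0 hd0) (div_ne_zero hd0 hc0)
          have h4 : c / d * (d / c) = 1 := by field_simp
          rw [h4, h1] at h3
          push_cast
          omega
      obtain ⟨hc0, hP⟩ := key
      obtain ⟨y, hy, hyO⟩ := InP.div_pi hm hp hv hP
      obtain ⟨s, hs, hys⟩ := hSr _ hyO
      refine ⟨Sum.inr ⟨s, hs⟩, (Quot.sound ?_).symm⟩
      have hmem : InP v (n₁ + m₁) (ϖ * (y - s)) :=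
        InP.mono' (by omega) (InP.mul_pi hm hp hv hys)
      refine dcrel_of g _ (uppU (ϖ * (y - s))) (uppU_mem h1 hmem) ?_
      change (!![0, 1; 1, ϖ * s] * !![1, ϖ * (y - s); 0, 1] : Matrix (Fin 2) (Fin 2) F) 1 0 * d
        = (!![0, 1; 1, ϖ * s] * !![1, ϖ * (y - s); 0, 1] : Matrix (Fin 2) (Fin 2) F) 1 1 * c
      have hdc : d = ϖ * y * c := by rw [← hy]; field_simp
      simp [Matrix.mul_apply, Fin.sum_univ_two]
      linear_combination hdc
  refine ⟨Finite.of_surjective f hf, ?_⟩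
  have hcard := Nat.card_le_card_of_surjective f hf
  rw [Nat.card_sum, Nat.card_eq_fintype_card (α := S), Fintype.card_coe] at hcard
  have h5 : Nat.card (Quot (DCRel v n₀ n₁ m₁)) ≤ 2 * q ^ (n₀ + m₁) := by
    rw [hq] at hS
    omega
  exact_mod_cast h5
end

section
/- Let n ≥ 1, n₁ = ⌈n/2⌉, n₀ = ⌊n/2⌋, and K⁰ = K^0(𝔭^{n₁−n₀}). For u, y ∈ F^× and x ∈ F, the matrix z(u)·n(x)·a(y)·w·n(ϖ^{−n₁}) lies in a(ϖ^{−n₁})·K⁰·a(ϖ^{n₁}) if and only if v(u) = n₁, v(y) = −2n₁, ϖ^{n₁}x ∈ 𝔬, and ϖ^{2n₁}y − ϖ^{n₁}x ∈ 𝔭^{n₁−n₀}. -/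
open Matrix

/-- Characterization of when `z(u)n(x)a(y)·w·n(ϖ^{−n₁})` lies in
`a(ϖ^{−n₁})·K⁰·a(ϖ^{n₁})`, where `K⁰ = K^0(𝔭^{n₁−n₀})`. -/
theorem stmt_10 {F : Type*} [Field F] [CharZero F] (v : F → ℤ)
    (hmul : ∀ x y : F, x ≠ 0 → y ≠ 0 → v (x * y) = v x + v y)
    (hadd : ∀ x y : F, x ≠ 0 → y ≠ 0 → x + y ≠ 0 → min (v x) (v y) ≤ v (x + y))
    (ϖ : F) (hϖ0 : ϖ ≠ 0) (hϖ : v ϖ = 1)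
    (n n₁ n₀ : ℕ) (hn : 1 ≤ n) (hn₁ : n₁ = (n + 1) / 2) (hn₀ : n₀ = n / 2)
    (u y : F) (hu : u ≠ 0) (hy : y ≠ 0) (x : F) :
    (∃ k : Matrix (Fin 2) (Fin 2) F, InK0upper v (n₁ - n₀) k ∧
        zMat u * nMat x * aMat y * wMat * nMat (ϖ ^ (-(n₁ : ℤ)))
          = aMat (ϖ ^ (-(n₁ : ℤ))) * k * aMat (ϖ ^ (n₁ : ℤ)))
      ↔ (v u = (n₁ : ℤ) ∧ v y = -(2 * (n₁ : ℤ)) ∧ InO v (ϖ ^ n₁ * x) ∧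
          InP v (n₁ - n₀) (ϖ ^ (2 * n₁) * y - ϖ ^ n₁ * x)) := by
  have h1 : v 1 = 0 := by
    have := hmul 1 1 one_ne_zero one_ne_zero
    rw [mul_one] at this
    omega
  have hm1 : v (-1) = 0 := by
    have := hmul (-1) (-1) (by simp) (by simp)
    rw [neg_one_mul, neg_neg, h1] at this
    omega
  have hP : ∀ m : ℕ, v (ϖ ^ m) = m := by
    intro m
    induction m with
    | zero => simpa using h1
    | succ k ih =>
      rw [pow_succ, hmul _ _ (pow_ne_zero _ hϖ0) hϖ0, ih, hϖ]
      push_cast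
      rfl
  -- multiplication by a unit
  have hunit : ∀ (r : ℕ) (c a : F), c ≠ 0 → v c = 0 → (InP v r (c * a) ↔ InP v r a) := by
    intro r c a hc hvc
    by_cases ha : a = 0
    · simp [ha, InP]
    · simp [InP, ha, hc, hmul c a hc ha, hvc]
  have hO : ∀ a : F, InO v a ↔ InP v 0 a := by
    intro a
    simp [InO, InP]
  have hneg : ∀ (r : ℕ) (a : F), InP v r (-a) ↔ InP v r a := by
    intro r a
    rw [← neg_one_mul]
    exact hunit r (-1) a (by simp) hm1
  have haddO : ∀ a b : F, InP v 0 a → InP v 0 b → InP v 0 (a + b) := by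
    intro a b ha hb
    by_cases a0 : a = 0
    · simpa [a0] using hb
    by_cases b0 : b = 0
    · simpa [b0] using ha
    by_cases s0 : a + b = 0
    · exact Or.inl s0
    have h := hadd a b a0 b0 s0
    simp only [InP, a0, b0, s0, false_or] at ha hb ⊢
    exact le_trans (le_min ha hb) h
  have hInP0 : ∀ r : ℕ, ∀ a : F, InP v r a → InP v 0 a := by
    intro r a h
    rcases h with h | h
    · exact Or.inl h
    · right
      push_cast
      omega
  obtain ⟨c, hc⟩ : ∃ c, c = u / ϖ ^ n₁ := ⟨_, rfl⟩
  have hP0 : ϖ ^ n₁ ≠ 0 := pow_ne_zero _ hϖ0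
  have huc : u = c * ϖ ^ n₁ := by rw [hc]; field_simp
  have hc0 : c ≠ 0 := by rw [hc]; exact div_ne_zero hu hP0
  have hvu : v u = v c + n₁ := by rw [huc, hmul _ _ hc0 hP0, hP]
  have hdetv : v (u ^ 2 * y) = 2 * v u + v y := by
    rw [hmul _ _ (pow_ne_zero _ hu) hy, pow_two, hmul _ _ hu hu]
    ring
  have hdetn : u ^ 2 * y ≠ 0 := mul_ne_zero (pow_ne_zero _ hu) hy
  have hkey : ∀ k : Matrix (Fin 2) (Fin 2) F,
      zMat u * nMat x * aMat y * wMat * nMat (ϖ ^ (-(n₁ : ℤ)))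
          = aMat (ϖ ^ (-(n₁ : ℤ))) * k * aMat (ϖ ^ (n₁ : ℤ)) ↔
      k = !![-(c * (ϖ ^ n₁ * x)), c * (ϖ ^ (2 * n₁) * y - ϖ ^ n₁ * x); -c, -c] := by
    intro k
    have e2 : ϖ ^ (2 * n₁) = ϖ ^ n₁ * ϖ ^ n₁ := by rw [two_mul, pow_add]
    rw [_root_.zpow_neg, _root_.zpow_natCast, e2, huc]
    generalize ϖ ^ n₁ = P at hP0
    rw [← Matrix.ext_iff, ← Matrix.ext_iff]
    simp only [Fin.forall_fin_two, zMat, nMat, aMat, wMat, Matrix.mul_apply, Fin.sum_univ_two,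
      Matrix.of_apply, Matrix.cons_val', Matrix.cons_val_zero, Matrix.cons_val_one,
      Matrix.cons_val_fin_one]
    constructor
    · rintro ⟨⟨h00, h01⟩, h10, h11⟩
      field_simp at h00 h01 h10 h11
      refine ⟨⟨?_, ?_⟩, ?_, ?_⟩
      · apply mul_right_cancel₀ hP0
        linear_combination -h00
      · linear_combination -h01
      · apply mul_right_cancel₀ hP0
        linear_combination -h10
      · apply mul_right_cancel₀ hP0
        linear_combination -h11
    · rintro ⟨⟨h00, h01⟩, h10, h11⟩
      rw [h00, h01, h10, h11]
      refine ⟨⟨?_, ?_⟩, ?_, ?_⟩ <;> field_simp <;> ring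
  have hdet : (!![-(c * (ϖ ^ n₁ * x)), c * (ϖ ^ (2 * n₁) * y - ϖ ^ n₁ * x); -c, -c]
      : Matrix (Fin 2) (Fin 2) F).det = u ^ 2 * y := by
    rw [Matrix.det_fin_two_of, huc]
    ring
  simp only [hkey, exists_eq_right, InK0upper, InK, hdet, hdetv, Fin.forall_fin_two, hO, hneg,
    Matrix.of_apply, Matrix.cons_val', Matrix.cons_val_zero, Matrix.cons_val_one,
    Matrix.cons_val_fin_one]
  constructor
  · rintro ⟨⟨⟨⟨ha, hb⟩, hcc, -⟩, -, hd⟩, hb'⟩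
    have hvc : 0 ≤ v c := by
      rcases hcc with h | h
      · exact absurd h hc0
      · simpa using h
    have hs := haddO _ _ ha hb
    have es : c * (ϖ ^ n₁ * x) + c * (ϖ ^ (2 * n₁) * y - ϖ ^ n₁ * x) = u * (ϖ ^ n₁ * y) := by
      rw [huc]
      ring
    rw [es] at hs
    have hvs : 0 ≤ v u + (n₁ + v y) := by
      rcases hs with h | h
      · exact absurd h (mul_ne_zero hu (mul_ne_zero hP0 hy))
      · rw [hmul _ _ hu (mul_ne_zero hP0 hy), hmul _ _ hP0 hy, hP] at h
        simpa using h
    have hvc0 : v c = 0 := by omega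
    rw [hunit _ _ _ hc0 hvc0] at ha hb'
    exact ⟨by omega, by omega, ha, hb'⟩
  · rintro ⟨h1', h2, h3, h4⟩
    have hvc0 : v c = 0 := by omega
    simp only [hunit _ _ _ hc0 hvc0]
    have hcc : InP v 0 c := Or.inr (by simp [hvc0])
    exact ⟨⟨⟨⟨h3, hInP0 _ _ h4⟩, hcc, hcc⟩, hdetn, by omega⟩, h4⟩
end

section
/- Let N ≥ 1 be an integer, let N₀ᵍ ≥ 1 and Qᵍ ≥ 1 be integers, let T ≥ 1, y > 0, B ≥ 0 be reals, and let a : ℤ≥1 → ℝ≥0 be a function with the following property: for every positive integer n₁ with n₁ | N^∞ and every integer r ≥ 0, Σ_{rN₀ᵍ ≤ n₀ < (r+1)N₀ᵍ, gcd(n₀, N) = 1} a(n₀·n₁)² ≤ B · N₀ᵍ · n₁^{−1/2}. Then for every ε > 0 there is a constant C depending only on ε and B such that Σ_{n ≥ 1, 2πny/Qᵍ ≤ 2T} a(n)² · min( T^{1/3}, |2πny/(QᵍT) − 1|^{−1/2} ) ≤ C · (NT)^ε · ( N₀ᵍ · T^{1/3} + Qᵍ·T/y ). -/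
/-- `n₁ ∣ N^∞`: every prime factor of `n₁` divides `N`. -/
def DvdInfty (n₁ N : ℕ) : Prop := ∀ p : ℕ, p.Prime → p ∣ n₁ → p ∣ N

theorem exists_decomp (N : ℕ) (n : ℕ) (hn : 1 ≤ n) :
    ∃ n₀ n₁ : ℕ, 1 ≤ n₀ ∧ 1 ≤ n₁ ∧ n = n₀ * n₁ ∧ Nat.Coprime n₀ N ∧ DvdInfty n₁ N := by
  induction n using induction_on_primes with
  | zero => omega
  | one =>
    refine ⟨1, 1, le_rfl, le_rfl, rfl, Nat.coprime_one_left N, ?_⟩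
    intro p hp h
    exact absurd (Nat.dvd_one.mp h) hp.one_lt.ne'
  | prime_mul p b hp ih =>
    have hb : 1 ≤ b := by
      rcases Nat.eq_zero_or_pos b with h | h
      · subst h; simp at hn
      · exact h
    obtain ⟨n₀, n₁, h0, h1, he, hc, hd⟩ := ih hb
    by_cases hpN : p ∣ N
    · refine ⟨n₀, p * n₁, h0, Nat.mul_pos hp.pos h1, by rw [he]; ring, hc, ?_⟩
      intro q hq hqd
      rcases (Nat.Prime.dvd_mul hq).mp hqd with h | h
      · rw [(Nat.prime_dvd_prime_iff_eq hq hp).mp h]; exact hpN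
      · exact hd q hq h
    · exact ⟨p * n₀, n₁, Nat.mul_pos hp.pos h0, h1, by rw [he]; ring,
        Nat.Coprime.mul_left ((Nat.Prime.coprime_iff_not_dvd hp).mpr hpN) hc, hd⟩

open Classical in
theorem sum_decomp_le (N M : ℕ) (f : ℕ → ℝ) (hf : ∀ n, 0 ≤ f n) :
    ∑ n ∈ Finset.Icc 1 M, f n ≤
      ∑ n₁ ∈ (Finset.Icc 1 M).filter (fun n₁ => DvdInfty n₁ N),
        ∑ n₀ ∈ (Finset.Icc 1 M).filter (fun n₀ => Nat.Coprime n₀ N), f (n₀ * n₁) := by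
  rw [← Finset.sum_product']
  have hs : Finset.Icc 1 M ⊆ (((Finset.Icc 1 M).filter (fun n₁ => DvdInfty n₁ N)) ×ˢ
      ((Finset.Icc 1 M).filter (fun n₀ => Nat.Coprime n₀ N))).image (fun p => p.2 * p.1) := by
    intro n hn
    rw [Finset.mem_Icc] at hn
    obtain ⟨n₀, n₁, h0, h1, he, hc, hd⟩ := exists_decomp N n hn.1
    rw [Finset.mem_image]
    refine ⟨(n₁, n₀), ?_, he.symm⟩
    simp only [Finset.mem_product, Finset.mem_filter, Finset.mem_Icc]
    refine ⟨⟨⟨h1, ?_⟩, hd⟩, ⟨h0, ?_⟩, hc⟩ <;> nlinarith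
  refine (Finset.sum_le_sum_of_subset_of_nonneg hs (fun _ _ _ => hf _)).trans ?_
  exact Finset.sum_image_le_of_nonneg (fun _ _ => hf _)

theorem block_bound (N N₀ M n₁ : ℕ) (hN₀ : 1 ≤ N₀) (hn₁ : 1 ≤ n₁) (g : ℕ → ℝ)
    (hg : ∀ n, 0 ≤ g n) (D : ℝ) (hD : 0 ≤ D)
    (hb : ∀ r : ℕ, ∑ n₀ ∈ (Finset.Ico (r * N₀) ((r + 1) * N₀)).filter (Nat.Coprime · N),
      g n₀ ≤ D * N₀) (lo hi : ℝ) (hlo : 0 ≤ lo) (hlh : lo ≤ hi) :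
    ∑ n₀ ∈ (Finset.Icc 1 M).filter (fun n₀ => Nat.Coprime n₀ N),
      (if lo ≤ ((n₀ * n₁ : ℕ) : ℝ) ∧ ((n₀ * n₁ : ℕ) : ℝ) ≤ hi then g n₀ else 0)
      ≤ D * (hi - lo + 2 * N₀) := by
  rw [← Finset.sum_filter]
  have hN' : (1 : ℝ) ≤ N₀ := by exact_mod_cast hN₀
  have hn' : (1 : ℝ) ≤ n₁ := by exact_mod_cast hn₁
  have hP : (0 : ℝ) < n₁ * N₀ := by positivity
  set r0 := ⌊lo / (n₁ * N₀)⌋₊ with hr0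
  set r1 := ⌊hi / (n₁ * N₀)⌋₊ with hr1
  have hmaps : ∀ n₀ ∈ ((Finset.Icc 1 M).filter (fun n₀ => Nat.Coprime n₀ N)).filter
      (fun n₀ => lo ≤ ((n₀ * n₁ : ℕ) : ℝ) ∧ ((n₀ * n₁ : ℕ) : ℝ) ≤ hi),
      n₀ / N₀ ∈ Finset.Icc r0 r1 := by
    intro n₀ h
    rw [Finset.mem_filter] at h
    obtain ⟨-, h1, h2⟩ := h
    push_cast at h1 h2
    have e : n₀ / N₀ = ⌊(n₀ : ℝ) / N₀⌋₊ := (Nat.floor_div_eq_div n₀ N₀).symm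
    rw [Finset.mem_Icc, e]
    constructor
    · apply Nat.floor_le_floor
      rw [div_le_div_iff₀ hP (by positivity)]
      nlinarith
    · apply Nat.floor_le_floor
      rw [div_le_div_iff₀ (by positivity) hP]
      nlinarith
  rw [← Finset.sum_fiberwise_of_maps_to hmaps]
  have hr01 : r0 ≤ r1 := Nat.floor_le_floor (by gcongr)
  calc _ ≤ ∑ r ∈ Finset.Icc r0 r1, D * N₀ := by
        apply Finset.sum_le_sum
        intro r _
        refine le_trans ?_ (hb r)
        apply Finset.sum_le_sum_of_subset_of_nonneg
        · intro n hn
          simp only [Finset.mem_filter, Finset.mem_Ico] at hn ⊢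
          obtain ⟨⟨⟨_, hc⟩, _⟩, hr⟩ := hn
          refine ⟨?_, hc⟩
          rw [← hr]
          exact ⟨Nat.div_mul_le_self n N₀, by
            have := Nat.lt_div_mul_add (a := n) (b := N₀) hN₀
            linarith [add_one_mul (n / N₀) N₀]⟩
        · intro _ _ _; exact hg _
    _ = ((r1 : ℝ) + 1 - r0) * (D * N₀) := by
        rw [Finset.sum_const, Nat.card_Icc, nsmul_eq_mul, Nat.cast_sub (by omega)]
        push_cast; ring
    _ ≤ ((hi - lo) / (n₁ * N₀) + 2) * (D * N₀) := by
        gcongr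
        have h1 : (r1 : ℝ) ≤ hi / (n₁ * N₀) := Nat.floor_le (div_nonneg (hlo.trans hlh) hP.le)
        have h0 : lo / (n₁ * N₀) < r0 + 1 := Nat.lt_floor_add_one _
        rw [sub_div]; linarith
    _ = D * ((hi - lo) / n₁ + 2 * N₀) := by field_simp
    _ ≤ _ := by
        gcongr
        exact div_le_self (by linarith) hn'

theorem weight_bound (m : ℝ) (u : ℝ) (hu : 0 < u) (hu1 : u ≤ 1) (K : ℕ) (hK : m ≤ 2 ^ (K + 1)) :
    min m (u ^ (-(1 / 2 : ℝ))) ≤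
      2 * ∑ k ∈ Finset.range (K + 1), (2 : ℝ) ^ k * (if u ≤ (1 / 4 : ℝ) ^ k then 1 else 0) := by
  have key : ∀ k ∈ Finset.range (K + 1), u ≤ (1 / 4 : ℝ) ^ k → (2 : ℝ) * 2 ^ k ≤
      2 * ∑ k ∈ Finset.range (K + 1), (2 : ℝ) ^ k * (if u ≤ (1 / 4 : ℝ) ^ k then 1 else 0) := by
    intro k hk hle
    gcongr
    have := Finset.single_le_sum (s := Finset.range (K + 1))
      (f := fun k => (2 : ℝ) ^ k * (if u ≤ (1 / 4 : ℝ) ^ k then 1 else 0))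
      (fun i _ => by positivity) hk
    simp only [hle, if_true, mul_one] at this
    exact this
  by_cases h : u ≤ (1 / 4 : ℝ) ^ K
  · refine (min_le_left _ _).trans (le_trans ?_ (key K (by simp) h))
    rw [pow_succ] at hK; linarith
  · have hex : ∃ j, ¬ u ≤ (1 / 4 : ℝ) ^ j := ⟨K, h⟩
    classical
    have hs := Nat.find_spec hex
    have hle : Nat.find hex ≤ K := Nat.find_min' hex h
    obtain ⟨j, hj⟩ : ∃ j, Nat.find hex = j + 1 := by
      apply Nat.exists_eq_succ_of_ne_zero
      intro h0
      rw [h0] at hs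
      simp at hs; linarith
    have hj' : u ≤ (1 / 4 : ℝ) ^ j := by
      by_contra hc
      have := Nat.find_min' hex hc
      omega
    refine (min_le_right _ _).trans (le_trans ?_ (key j (by simp; omega) hj'))
    rw [hj, not_le] at hs
    calc u ^ (-(1 / 2 : ℝ)) ≤ ((1 / 4 : ℝ) ^ (j + 1)) ^ (-(1 / 2 : ℝ)) :=
          Real.rpow_le_rpow_of_nonpos (by positivity) hs.le (by norm_num)
      _ = 2 * 2 ^ j := by
          have : ((1 / 4 : ℝ) ^ (j + 1)) = ((2 : ℝ) ^ (j + 1)) ^ (-2 : ℝ) := by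
            rw [Real.rpow_neg (by positivity), Real.rpow_two, ← pow_mul, mul_comm, pow_mul,
              ← inv_pow]
            norm_num
          rw [this, ← Real.rpow_mul (by positivity)]
          norm_num
          ring

theorem weight_bound_zero (m : ℝ) (u : ℝ) (hu : u = 0) (K : ℕ) (hK : m ≤ 2 ^ (K + 1)) :
    m ≤ 2 * ∑ k ∈ Finset.range (K + 1), (2 : ℝ) ^ k * (if u ≤ (1 / 4 : ℝ) ^ k then 1 else 0) := by
  subst hu
  have := Finset.single_le_sum (s := Finset.range (K + 1))
      (f := fun k => (2 : ℝ) ^ k * (if (0 : ℝ) ≤ (1 / 4 : ℝ) ^ k then 1 else 0))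
      (fun i _ => by positivity) (Finset.mem_range.mpr (Nat.lt_succ_self K))
  have h2 : (0 : ℝ) ≤ (1 / 4 : ℝ) ^ K := by positivity
  simp only [h2, if_true] at this
  rw [pow_succ] at hK
  linarith

theorem prod_const_le (ε : ℝ) (hε : 0 < ε) (L : ℝ) (hL : 1 ≤ L) :
    ∃ C : ℝ, 0 < C ∧ ∀ N : ℕ, 1 ≤ N → ∏ _p ∈ N.primeFactors, L ≤ C * (N : ℝ) ^ ε := by
  set P := ⌈L ^ (1 / ε)⌉₊ with hP
  refine ⟨L ^ P, by positivity, fun N hN => ?_⟩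
  have h1 : ∀ p ∈ N.primeFactors, L ≤ (if p < P then L else 1) * (p : ℝ) ^ ε := by
    intro p hp
    have hp1 : (1 : ℝ) ≤ p := by exact_mod_cast (Nat.prime_of_mem_primeFactors hp).one_lt.le
    split_ifs with h
    · have := Real.one_le_rpow hp1 hε.le
      nlinarith
    · rw [one_mul]
      have h2 : L ^ (1 / ε) ≤ p := (Nat.le_ceil _).trans (by exact_mod_cast not_lt.mp h)
      calc L = (L ^ (1 / ε)) ^ ε := by
            rw [← Real.rpow_mul (by positivity), one_div_mul_cancel hε.ne', Real.rpow_one]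
        _ ≤ _ := Real.rpow_le_rpow (by positivity) h2 hε.le
  refine (Finset.prod_le_prod (fun _ _ => by positivity) h1).trans ?_
  rw [Finset.prod_mul_distrib]
  gcongr
  · rw [Finset.prod_ite, Finset.prod_const, Finset.prod_const_one, mul_one]
    apply pow_le_pow_right₀ hL
    calc _ ≤ (Finset.range P).card := by
          apply Finset.card_le_card
          intro p; simp
      _ = P := by simp
  · rw [Real.finsetProd_rpow _ _ (fun _ _ => by positivity)]
    apply Real.rpow_le_rpow (Finset.prod_nonneg fun _ _ => by positivity) _ hε.le
    have h3 : ((∏ p ∈ N.primeFactors, p : ℕ) : ℝ) ≤ (N : ℝ) :=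
      Nat.cast_le.mpr (Nat.le_of_dvd hN (Nat.prod_primeFactors_dvd N))
    rw [Nat.cast_prod] at h3
    exact h3

open Classical in
theorem Z_bound (ε : ℝ) (hε : 0 < ε) :
    ∃ C : ℝ, 0 < C ∧ ∀ N : ℕ, 1 ≤ N → ∀ M : ℕ,
      ∑ n₁ ∈ (Finset.Icc 1 M).filter (fun n₁ => DvdInfty n₁ N), (n₁ : ℝ) ^ (-(1 / 2 : ℝ))
        ≤ C * (N : ℝ) ^ ε := by
  obtain ⟨C, hC, h⟩ := prod_const_le ε hε 4 (by norm_num)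
  refine ⟨C, hC, fun N hN M => le_trans ?_ (h N hN)⟩
  let f : ℕ →* ℝ :=
    { toFun := fun n => (n : ℝ) ^ (-(1 / 2 : ℝ))
      map_one' := by simp
      map_mul' := fun a b => by
        push_cast; exact Real.mul_rpow (by positivity) (by positivity) }
  have hhalf : ∀ p : ℕ, 2 ≤ p → (p : ℝ) ^ (-(1 / 2 : ℝ)) ≤ 3 / 4 := by
    intro p hp
    have hp2 : (2 : ℝ) ≤ p := by exact_mod_cast hp
    calc (p : ℝ) ^ (-(1 / 2 : ℝ)) ≤ ((4 / 3 : ℝ) ^ (2 : ℝ)) ^ (-(1 / 2 : ℝ)) :=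
          Real.rpow_le_rpow_of_nonpos (by positivity) (le_trans (by norm_num) hp2) (by norm_num)
      _ = 3 / 4 := by
          rw [← Real.rpow_mul (by norm_num)]
          norm_num [Real.rpow_neg_one]
  have hf1 : ∀ {p : ℕ}, p.Prime → ‖f p‖ < 1 := by
    intro p hp
    have := hhalf p hp.two_le
    have h0 : (0 : ℝ) ≤ (p : ℝ) ^ (-(1 / 2 : ℝ)) := by positivity
    change ‖(p : ℝ) ^ (-(1 / 2 : ℝ))‖ < 1
    rw [Real.norm_of_nonneg h0]; linarith
  obtain ⟨hsum, hhas⟩ :=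
    EulerProduct.summable_and_hasSum_factoredNumbers_prod_filter_prime_geometric hf1 N.primeFactors
  have hmem : ∀ n ∈ (Finset.Icc 1 M).filter (fun n₁ => DvdInfty n₁ N),
      n ∈ Nat.factoredNumbers N.primeFactors := by
    intro n hn
    simp only [Finset.mem_filter, Finset.mem_Icc] at hn
    rw [Nat.mem_factoredNumbers]
    refine ⟨by omega, fun p hp => ?_⟩
    have hpp := Nat.prime_of_mem_primeFactorsList hp
    exact Nat.mem_primeFactors.mpr ⟨hpp, hn.2 p hpp (Nat.dvd_of_mem_primeFactorsList hp), by omega⟩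
  have hle : ∑ n₁ ∈ (Finset.Icc 1 M).filter (fun n₁ => DvdInfty n₁ N), (n₁ : ℝ) ^ (-(1 / 2 : ℝ))
      ≤ ∏ p ∈ N.primeFactors with p.Prime, (1 - f p)⁻¹ := by
    have := sum_le_hasSum (((Finset.Icc 1 M).filter (fun n₁ => DvdInfty n₁ N)).subtype
      (fun n => n ∈ Nat.factoredNumbers N.primeFactors)) (fun i _ => by
        change (0 : ℝ) ≤ ((i : ℕ) : ℝ) ^ (-(1 / 2 : ℝ)); positivity) hhas
    refine le_trans (le_of_eq ?_) this
    exact (Finset.sum_subtype_of_mem (fun n : ℕ => (n : ℝ) ^ (-(1 / 2 : ℝ))) hmem).symm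
  refine hle.trans ?_
  have hfil : N.primeFactors.filter Nat.Prime = N.primeFactors :=
    Finset.filter_true_of_mem (fun p hp => Nat.prime_of_mem_primeFactors hp)
  rw [hfil]
  apply Finset.prod_le_prod
  · intro p hp
    have := hhalf p (Nat.prime_of_mem_primeFactors hp).two_le
    change 0 ≤ (1 - (p : ℝ) ^ (-(1 / 2 : ℝ)))⁻¹
    apply inv_nonneg.mpr; linarith
  · intro p hp
    have := hhalf p (Nat.prime_of_mem_primeFactors hp).two_le
    change (1 - (p : ℝ) ^ (-(1 / 2 : ℝ)))⁻¹ ≤ 4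
    rw [inv_le_comm₀ (by linarith) (by norm_num)]
    linarith


/-- An averaged bound for weighted Bessel-type sums: if the coefficients `a`
satisfy a Ramanujan-type bound on average along arithmetic progressions, then
`Σ_{n : 2πny/Qᵍ ≤ 2T} a(n)² min(T^{1/3}, |2πny/(QᵍT) − 1|^{−1/2})
  ≤ C (NT)^ε (N₀ᵍ T^{1/3} + Qᵍ T / y)`. -/
theorem stmt_11 :
    ∀ ε : ℝ, 0 < ε → ∀ B : ℝ, 0 ≤ B →
    ∃ C : ℝ, 0 < C ∧
      ∀ N N₀g Qg : ℕ, 1 ≤ N → 1 ≤ N₀g → 1 ≤ Qg →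
      ∀ T y : ℝ, 1 ≤ T → 0 < y →
      ∀ a : ℕ → ℝ, (∀ n, 0 ≤ a n) →
        (∀ n₁ : ℕ, 1 ≤ n₁ → DvdInfty n₁ N → ∀ r : ℕ,
          ∑ n₀ ∈ (Finset.Ico (r * N₀g) ((r + 1) * N₀g)).filter (Nat.Coprime · N),
              a (n₀ * n₁) ^ 2
            ≤ B * (N₀g : ℝ) * (n₁ : ℝ) ^ (-(1 / 2 : ℝ))) →
        ∑ n ∈ Finset.Icc 1 ⌊Qg * T / (Real.pi * y)⌋₊,
            a n ^ 2 *
              (if 2 * Real.pi * n * y / Qg = T then T ^ ((1 : ℝ) / 3)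
               else min (T ^ ((1 : ℝ) / 3))
                 (|2 * Real.pi * n * y / (Qg * T) - 1| ^ (-(1 / 2 : ℝ))))
          ≤ C * ((N : ℝ) * T) ^ ε * ((N₀g : ℝ) * T ^ ((1 : ℝ) / 3) + Qg * T / y) := by
  classical
  intro ε hε B hB
  obtain ⟨Z, hZ, hZb⟩ := Z_bound ε hε
  refine ⟨8 * B * Z + 1, by positivity, ?_⟩
  intro N N₀g Qg hN hN₀ hQ T y hT hy a ha hyp
  have hN' : (1 : ℝ) ≤ N := by exact_mod_cast hN
  have hQ' : (1 : ℝ) ≤ Qg := by exact_mod_cast hQ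
  have hN₀' : (1 : ℝ) ≤ N₀g := by exact_mod_cast hN₀
  have hpi := Real.pi_pos
  have hT0 : 0 < T := by linarith
  set m := T ^ ((1 : ℝ) / 3) with hm
  have hm1 : 1 ≤ m := Real.one_le_rpow hT (by norm_num)
  obtain ⟨K, hK1, hK2⟩ := exists_nat_pow_near hm1 (one_lt_two)
  set X : ℝ := Qg * T / (2 * Real.pi * y) with hX
  have hX0 : 0 < X := by positivity
  have hXle : X ≤ Qg * T / y := by
    rw [hX]
    apply div_le_div_of_nonneg_left (by positivity) hy
    nlinarith [Real.pi_gt_three]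
  set M := ⌊Qg * T / (Real.pi * y)⌋₊ with hM
  have hMX : (M : ℝ) ≤ 2 * X := by
    have h : (M : ℝ) ≤ Qg * T / (Real.pi * y) := Nat.floor_le (by positivity)
    refine h.trans (le_of_eq ?_)
    rw [hX]; field_simp
  -- pointwise weight bound
  have hw : ∀ n ∈ Finset.Icc 1 M, a n ^ 2 *
      (if 2 * Real.pi * n * y / Qg = T then m
        else min m (|2 * Real.pi * n * y / (Qg * T) - 1| ^ (-(1 / 2 : ℝ)))) ≤
      ∑ k ∈ Finset.range (K + 1), 2 * (2 : ℝ) ^ k *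
        (if X * (1 - (1 / 4) ^ k) ≤ (n : ℝ) ∧ (n : ℝ) ≤ X * (1 + (1 / 4) ^ k)
          then a n ^ 2 else 0) := by
    intro n hn
    rw [Finset.mem_Icc] at hn
    have hnM : (n : ℝ) ≤ 2 * X := le_trans (by exact_mod_cast hn.2) hMX
    have hu : 2 * Real.pi * n * y / (Qg * T) - 1 = n / X - 1 := by
      rw [hX]; field_simp
    have hiff : ∀ k : ℕ, |n / X - 1| ≤ (1 / 4 : ℝ) ^ k ↔
        (X * (1 - (1 / 4) ^ k) ≤ (n : ℝ) ∧ (n : ℝ) ≤ X * (1 + (1 / 4) ^ k)) := by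
      intro k
      have e : (n : ℝ) = X * (n / X) := by field_simp
      rw [abs_le]
      constructor
      · rintro ⟨h1, h2⟩
        rw [e]
        constructor <;> apply mul_le_mul_of_nonneg_left _ hX0.le <;> linarith
      · rintro ⟨h1, h2⟩
        rw [e] at h1 h2
        have h1 := le_of_mul_le_mul_left h1 hX0
        have h2 := le_of_mul_le_mul_left h2 hX0
        constructor <;> linarith
    have hW : (if 2 * Real.pi * n * y / Qg = T then m
        else min m (|2 * Real.pi * n * y / (Qg * T) - 1| ^ (-(1 / 2 : ℝ)))) ≤
        2 * ∑ k ∈ Finset.range (K + 1), (2 : ℝ) ^ k *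
          (if |n / X - 1| ≤ (1 / 4 : ℝ) ^ k then 1 else 0) := by
      rw [hu]
      split_ifs with h
      · apply weight_bound_zero m _ _ K hK2.le
        rw [← hu, abs_eq_zero, ← div_div, h, div_self hT0.ne', sub_self]
      · apply weight_bound m _ _ _ K hK2.le
        · rw [abs_pos, ← hu, ← div_div]
          intro h0
          apply h
          have h1 : 2 * Real.pi * n * y / Qg / T = 1 := by linarith
          rwa [div_eq_one_iff_eq hT0.ne'] at h1
        · have := (hiff 0).mpr ⟨by simp, by simpa [mul_comm, one_add_one_eq_two] using hnM⟩
          simpa using this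
    refine (mul_le_mul_of_nonneg_left hW (sq_nonneg _)).trans (le_of_eq ?_)
    rw [Finset.mul_sum, Finset.mul_sum]
    apply Finset.sum_congr rfl
    intro k _
    simp only [hiff k]
    split_ifs <;> ring
  refine (Finset.sum_le_sum hw).trans ?_
  rw [Finset.sum_comm]
  set S := ∑ n₁ ∈ (Finset.Icc 1 M).filter (fun n₁ => DvdInfty n₁ N),
    (n₁ : ℝ) ^ (-(1 / 2 : ℝ)) with hS
  have hS0 : 0 ≤ S := Finset.sum_nonneg fun _ _ => by positivity
  have hSk : ∀ k : ℕ, ∑ n ∈ Finset.Icc 1 M,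
        (if X * (1 - (1 / 4) ^ k) ≤ (n : ℝ) ∧ (n : ℝ) ≤ X * (1 + (1 / 4) ^ k)
          then a n ^ 2 else 0) ≤ B * S * (2 * X * (1 / 4) ^ k + 2 * N₀g) := by
    intro k
    have h4 : (1 / 4 : ℝ) ^ k ≤ 1 := pow_le_one₀ (by norm_num) (by norm_num)
    have h40 : (0 : ℝ) ≤ (1 / 4 : ℝ) ^ k := by positivity
    refine (sum_decomp_le N M (fun n : ℕ =>
      (if X * (1 - (1 / 4) ^ k) ≤ (n : ℝ) ∧ (n : ℝ) ≤ X * (1 + (1 / 4) ^ k)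
          then a n ^ 2 else 0)) (fun n => by positivity)).trans ?_
    rw [hS, Finset.mul_sum, Finset.sum_mul]
    apply Finset.sum_le_sum
    intro n₁ hn₁
    simp only [Finset.mem_filter, Finset.mem_Icc] at hn₁
    refine (block_bound N N₀g M n₁ hN₀ hn₁.1.1 (fun n₀ => a (n₀ * n₁) ^ 2)
      (fun _ => sq_nonneg _) (B * (n₁ : ℝ) ^ (-(1 / 2 : ℝ))) (by positivity)
      (fun r => (hyp n₁ hn₁.1.1 hn₁.2 r).trans (le_of_eq (by ring)))
      (X * (1 - (1 / 4) ^ k)) (X * (1 + (1 / 4) ^ k))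
      (mul_nonneg hX0.le (by linarith))
      (mul_le_mul_of_nonneg_left (by linarith) hX0.le)).trans (le_of_eq ?_)
    ring
  have hg1 : ∀ K : ℕ, ∑ k ∈ Finset.range (K + 1), (1 / 2 : ℝ) ^ k ≤ 2 := by
    intro K
    have : ∑ k ∈ Finset.range (K + 1), (1 / 2 : ℝ) ^ k = 2 - (1 / 2) ^ K := by
      induction K with
      | zero => norm_num
      | succ j ih => rw [Finset.sum_range_succ, ih, pow_succ]; ring
    rw [this]; linarith [show (0 : ℝ) ≤ (1 / 2) ^ K by positivity]
  have hg2 : ∀ K : ℕ, ∑ k ∈ Finset.range (K + 1), (2 : ℝ) ^ k ≤ 2 * 2 ^ K := by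
    intro K
    have : ∑ k ∈ Finset.range (K + 1), (2 : ℝ) ^ k = 2 * 2 ^ K - 1 := by
      induction K with
      | zero => norm_num
      | succ j ih => rw [Finset.sum_range_succ, ih, pow_succ]; ring
    rw [this]; linarith
  have hBS : 0 ≤ B * S := mul_nonneg hB hS0
  have hNT : (N : ℝ) ^ ε ≤ ((N : ℝ) * T) ^ ε :=
    Real.rpow_le_rpow (by positivity) (by nlinarith) hε.le
  calc _ ≤ ∑ k ∈ Finset.range (K + 1),
          2 * (2 : ℝ) ^ k * (B * S * (2 * X * (1 / 4) ^ k + 2 * N₀g)) := by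
        apply Finset.sum_le_sum
        intro k _
        rw [← Finset.mul_sum]
        exact mul_le_mul_of_nonneg_left (hSk k) (by positivity)
    _ = 4 * (B * S) * (X * ∑ k ∈ Finset.range (K + 1), (1 / 2 : ℝ) ^ k
          + N₀g * ∑ k ∈ Finset.range (K + 1), (2 : ℝ) ^ k) := by
        clear_value S
        rw [Finset.mul_sum, Finset.mul_sum, ← Finset.sum_add_distrib, Finset.mul_sum]
        apply Finset.sum_congr rfl
        intro k _
        have : (1 / 2 : ℝ) ^ k = 2 ^ k * (1 / 4) ^ k := by rw [← mul_pow]; norm_num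
        rw [this]; ring
    _ ≤ 4 * (B * S) * (X * 2 + N₀g * (2 * m)) := by
        gcongr
        · exact hg1 K
        · exact (hg2 K).trans (by linarith)
    _ = 8 * B * S * (N₀g * m + X) := by ring
    _ ≤ 8 * B * (Z * ((N : ℝ) * T) ^ ε) * (N₀g * m + Qg * T / y) := by
        gcongr
        exact (hZb N hN M).trans (by gcongr)
    _ = (8 * B * Z) * ((N : ℝ) * T) ^ ε * (N₀g * m + Qg * T / y) := by ring
    _ ≤ _ := by
        gcongr
        linarith
end
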